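/- arXiv:2208.13871 — 2 statements merged into one kernel-verified Lean document; each statement's English description precedes it below -/
import Mathlib

section
/- Let A be a random variable and V = (V_i)_{i ∈ I} a finite family of random variables whose joint law is absolutely continuous with respect to the product ⨂_{i ∈ I} P_{V_i} of its one-dimensional marginal laws with a density that is positive almost everywhere. Then the treatment Markov boundary is itself a treatment Markov blanket, i.e., R_A(V) ∈ 𝔯_A(V); equivalently, A ⊥⊥ V_{I ∖ R_A(V)} | V_{R_A(V)}, so R_A(V) is the minimum element of 𝔯_A(V). -/
/-!
Let `V` also denote the whole vector `ω ↦ (V_i ω)_i`. A set `J` is a treatment Markov blanket iff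
for every Borel set `s` the conditional probability `P(A ∈ s | V)` is a.s. a measurable function of
`V_J` alone (`isTreatBlanket_iff`).

Under the positivity assumption blankets are closed under intersection
(`IsTreatBlanket.inter`). If `P(A ∈ s | V) = f(V_J) = g(V_K)` almost surely, then
`f(z_J) = g(z_K)` for almost every `z` under the product `ν` of the marginal laws, because `ν` is
absolutely continuous with respect to the joint law. If `x, y` are independent with law `ν`, then
the vector `z` equal to `x` on `J` and to `y` off `J` again has law `ν`
(`map_piecewise_prod_pi`). Hence `f(x_J) = g(x_{J ∩ K}, y_{K ∖ J})` for almost all `(x, y)`, and by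
Fubini one value of `y` can be frozen, which exhibits `f(x_J)` as a function of `x_{J ∩ K}`.

The index set being finite, the boundary is a finite intersection of blankets, starting from the
trivial blanket given by the whole index set.
-/

open MeasureTheory ProbabilityTheory

/-- `X ⊥⊥ Y | W` under `μ`: conditional independence of the random elements `X` and `Y`
given the σ-algebra generated by the random element `W`. -/
def CondIndepGiven {Ω α β γ : Type*} [mΩ : MeasurableSpace Ω] [StandardBorelSpace Ω]
    [MeasurableSpace α] [MeasurableSpace β] [MeasurableSpace γ]
    (μ : Measure Ω) [IsFiniteMeasure μ]
    (X : Ω → α) (Y : Ω → β) (W : Ω → γ) : Prop :=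
  ∃ hle : MeasurableSpace.comap W inferInstance ≤ mΩ,
    CondIndepFun (MeasurableSpace.comap W inferInstance) hle X Y μ

/-- The subvector `(V_i)_{i ∈ J}` of a family of random variables. -/
def subvec {Ω I : Type*} (V : I → Ω → ℝ) (J : Set I) : Ω → (J → ℝ) :=
  fun ω j => V j ω

/-- The joint law of `(V_i)_{i ∈ I}` is absolutely continuous w.r.t. the product
`⨂_{i ∈ I} P_{V_i}` of its one-dimensional marginal laws, with a density that is positive
almost everywhere. -/
def PositiveFamilyDensity {Ω I : Type*} [MeasurableSpace Ω] [Fintype I]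
    (μ : Measure Ω) (V : I → Ω → ℝ) : Prop :=
  μ.map (fun ω i => V i ω) ≪ Measure.pi (fun i => μ.map (V i)) ∧
    ∀ᵐ x ∂(Measure.pi fun i => μ.map (V i)),
      0 < (μ.map (fun ω i => V i ω)).rnDeriv (Measure.pi fun i => μ.map (V i)) x

/-- The joint law of `(W, (V_i)_{i ∈ I})` is absolutely continuous w.r.t. the product
`P_W ⊗ ⨂_{i ∈ I} P_{V_i}` of its one-dimensional marginal laws, with a density that is
positive almost everywhere. -/
def PositivePairDensity {Ω α I : Type*} [MeasurableSpace Ω] [MeasurableSpace α] [Fintype I]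
    (μ : Measure Ω) (W : Ω → α) (V : I → Ω → ℝ) : Prop :=
  μ.map (fun ω => (W ω, fun i => V i ω)) ≪ (μ.map W).prod (Measure.pi fun i => μ.map (V i)) ∧
    ∀ᵐ x ∂((μ.map W).prod (Measure.pi fun i => μ.map (V i))),
      0 < (μ.map (fun ω => (W ω, fun i => V i ω))).rnDeriv
            ((μ.map W).prod (Measure.pi fun i => μ.map (V i))) x

/-- The joint law of `(W, U, (V_i)_{i ∈ I})` is absolutely continuous w.r.t. the product
`P_W ⊗ P_U ⊗ ⨂_{i ∈ I} P_{V_i}` of its one-dimensional marginal laws, with a density that is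
positive almost everywhere. -/
def PositiveTripleDensity {Ω I : Type*} [MeasurableSpace Ω] [Fintype I]
    (μ : Measure Ω) (W U : Ω → ℝ) (V : I → Ω → ℝ) : Prop :=
  μ.map (fun ω => (W ω, U ω, fun i => V i ω)) ≪
      (μ.map W).prod ((μ.map U).prod (Measure.pi fun i => μ.map (V i))) ∧
    ∀ᵐ x ∂((μ.map W).prod ((μ.map U).prod (Measure.pi fun i => μ.map (V i)))),
      0 < (μ.map (fun ω => (W ω, U ω, fun i => V i ω))).rnDeriv
            ((μ.map W).prod ((μ.map U).prod (Measure.pi fun i => μ.map (V i)))) x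

/-- `J ∈ 𝔯_A(V)`: `J` is a treatment Markov blanket of the family `V`,
i.e. `A ⊥⊥ V_{I∖J} | V_J`. -/
def IsTreatBlanket {Ω I : Type*} [MeasurableSpace Ω] [StandardBorelSpace Ω]
    (μ : Measure Ω) [IsFiniteMeasure μ] (A : Ω → ℝ) (V : I → Ω → ℝ) (J : Set I) : Prop :=
  CondIndepGiven μ A (subvec V (Set.univ \ J)) (subvec V J)

/-- `J ∈ 𝔯_{Y|A}(V)`: `J` is an outcome Markov blanket of the family `V`,
i.e. `Y ⊥⊥ V_{I∖J} | (A, V_J)`. -/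
def IsOutBlanket {Ω I : Type*} [MeasurableSpace Ω] [StandardBorelSpace Ω]
    (μ : Measure Ω) [IsFiniteMeasure μ] (A Y : Ω → ℝ) (V : I → Ω → ℝ) (J : Set I) : Prop :=
  CondIndepGiven μ Y (subvec V (Set.univ \ J)) (fun ω => (A ω, subvec V J ω))

/-- `R_A(V_J)`: the treatment Markov boundary of the subfamily `(V_i)_{i ∈ J}`, i.e. the
intersection of all `J' ⊆ J` such that `A ⊥⊥ V_{J∖J'} | V_{J'}`. -/
def treatBoundary {Ω I : Type*} [MeasurableSpace Ω] [StandardBorelSpace Ω]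
    (μ : Measure Ω) [IsFiniteMeasure μ] (A : Ω → ℝ) (V : I → Ω → ℝ) (J : Set I) : Set I :=
  ⋂₀ {J' : Set I | J' ⊆ J ∧ CondIndepGiven μ A (subvec V (J \ J')) (subvec V J')}

/-- `R_{Y|A}(V_J)`: the outcome Markov boundary of the subfamily `(V_i)_{i ∈ J}`, i.e. the
intersection of all `J' ⊆ J` such that `Y ⊥⊥ V_{J∖J'} | (A, V_{J'})`. -/
def outBoundary {Ω I : Type*} [MeasurableSpace Ω] [StandardBorelSpace Ω]
    (μ : Measure Ω) [IsFiniteMeasure μ] (A Y : Ω → ℝ) (V : I → Ω → ℝ) (J : Set I) : Set I :=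
  ⋂₀ {J' : Set I | J' ⊆ J ∧
        CondIndepGiven μ Y (subvec V (J \ J')) (fun ω => (A ω, subvec V J' ω))}

/-- `A` is a binary treatment taking values in `{0, 1}`. -/
def IsBinary {Ω : Type*} (A : Ω → ℝ) : Prop :=
  ∀ ω, A ω = 0 ∨ A ω = 1

/-- Consistency of the observed outcome `Y` with the potential outcomes `Y₀, Y₁`:
`Y = Y₁` a.s. on `{A = 1}` and `Y = Y₀` a.s. on `{A = 0}`. -/
def Consistency {Ω : Type*} [MeasurableSpace Ω] (μ : Measure Ω) (A Y Y0 Y1 : Ω → ℝ) : Prop :=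
  (∀ᵐ ω ∂μ, A ω = 1 → Y ω = Y1 ω) ∧ (∀ᵐ ω ∂μ, A ω = 0 → Y ω = Y0 ω)

/-- The random vector `C` controls for confounding: `Y_a ⊥⊥ A | C` for `a = 0, 1`. -/
def ControlsConfounding {Ω γ : Type*} [MeasurableSpace Ω] [StandardBorelSpace Ω]
    [MeasurableSpace γ] (μ : Measure Ω) [IsFiniteMeasure μ]
    (A Y0 Y1 : Ω → ℝ) (C : Ω → γ) : Prop :=
  CondIndepGiven μ Y0 A C ∧ CondIndepGiven μ Y1 A C

section Helpers

variable {Ω I : Type*} [mΩ : MeasurableSpace Ω]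

lemma measurable_subvec {V : I → Ω → ℝ} (hV : ∀ i, Measurable (V i)) (J : Set I) :
    Measurable (subvec V J) :=
  measurable_pi_lambda _ fun j => hV j

/-- `P(A ∈ s | V)` is, for every Borel set `s`, a.s. a measurable function of `V_J`. -/
def CondProbFactors (μ : Measure Ω) (A : Ω → ℝ) (V : I → Ω → ℝ) (J : Set I) : Prop :=
  ∀ s : Set ℝ, MeasurableSet s → ∃ f : (J → ℝ) → ℝ, Measurable f ∧
    μ⟦A ⁻¹' s | MeasurableSpace.comap (fun ω i => V i ω) inferInstance⟧
      =ᵐ[μ] fun ω => f (subvec V J ω)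

/-- `(V_J, V_{I ∖ J})` generates the same σ-algebra as the whole vector `V`. -/
lemma comap_subvec_prod (V : I → Ω → ℝ) (J : Set I) :
    MeasurableSpace.comap (fun ω => (subvec V J ω, subvec V (Set.univ \ J) ω)) inferInstance
      = MeasurableSpace.comap (fun ω i => V i ω) inferInstance := by
  classical
  apply le_antisymm
  · have h : Measurable (fun x : I → ℝ =>
        ((fun j : J => x j), (fun j : (Set.univ \ J : Set I) => x j))) := by fun_prop
    exact (h.comp (comap_measurable (fun ω i => V i ω))).comap_le
  · have h : Measurable (fun (p : (J → ℝ) × ((Set.univ \ J : Set I) → ℝ)) (i : I) =>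
        if hi : i ∈ J then p.1 ⟨i, hi⟩ else p.2 ⟨i, Set.mem_univ i, hi⟩) := by
      refine measurable_pi_lambda _ fun i => ?_
      by_cases hi : i ∈ J
      · simp only [hi, dite_true]; fun_prop
      · simp only [hi, dite_false]; fun_prop
    have h2 := (h.comp (comap_measurable
      (fun ω => (subvec V J ω, subvec V (Set.univ \ J) ω)))).comap_le
    convert! h2 using 2
    ext ω i
    by_cases hi : i ∈ J <;> simp [hi, subvec]

variable [StandardBorelSpace Ω]

lemma IsTreatBlanket.condProbFactors {μ : Measure Ω} [IsProbabilityMeasure μ]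
    {A : Ω → ℝ} {V : I → Ω → ℝ} {J : Set I} [Countable I]
    (hA : Measurable A) (hV : ∀ i, Measurable (V i)) (h : IsTreatBlanket μ A V J) :
    CondProbFactors μ A V J := by
  intro s hs
  obtain ⟨hle, h⟩ := h
  have hW := measurable_subvec hV J
  have hY := measurable_subvec hV (Set.univ \ J)
  have h1 := (condIndepFun_iff_condDistrib_prod_ae_eq_prodMkRight hA hY hW).1 h.symm
  have h2 := ae_of_ae_map (hW.prodMk hY).aemeasurable h1
  have h3 := condDistrib_ae_eq_condExp (μ := μ) (hW.prodMk hY) hA hs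
  refine ⟨fun w => (condDistrib A (subvec V J) μ w).real s,
    (Kernel.measurable_coe _ hs).ennreal_toReal, ?_⟩
  rw [← comap_subvec_prod V J]
  filter_upwards [h2, h3] with ω h2 h3
  rw [← h3, h2]
  rfl

lemma CondProbFactors.isTreatBlanket {μ : Measure Ω} [IsProbabilityMeasure μ]
    {A : Ω → ℝ} {V : I → Ω → ℝ} {J : Set I}
    (hA : Measurable A) (hV : ∀ i, Measurable (V i)) (h : CondProbFactors μ A V J) :
    IsTreatBlanket μ A V J := by
  have hW := measurable_subvec hV J
  have hY := measurable_subvec hV (Set.univ \ J)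
  have hVm : Measurable (fun ω i => V i ω) := measurable_pi_lambda _ hV
  refine ⟨hW.comap_le, ?_⟩
  rw [condIndepFun_iff_condExp_inter_preimage_eq_mul hA hY]
  intro s t hs ht
  obtain ⟨f, hf, hfe⟩ := h s hs
  set m := MeasurableSpace.comap (fun ω i => V i ω) inferInstance with hm
  set m' := MeasurableSpace.comap (subvec V J) inferInstance with hm'
  have hmle : m ≤ mΩ := hVm.comap_le
  have hm'm : m' ≤ m := by
    have h0 : Measurable (fun x : I → ℝ => (fun j : J => x j)) := by fun_prop
    exact (h0.comp (comap_measurable (fun ω i => V i ω))).comap_le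
  have hYm : Measurable[m] (subvec V (Set.univ \ J)) := by
    have h0 : Measurable (fun x : I → ℝ => (fun j : (Set.univ \ J : Set I) => x j)) := by fun_prop
    exact h0.comp (comap_measurable (fun ω i => V i ω))
  set F : Ω → ℝ := fun ω => f (subvec V J ω) with hF
  have hFm : StronglyMeasurable[m'] F :=
    (hf.comp (comap_measurable (subvec V J))).stronglyMeasurable
  set a : Ω → ℝ := (A ⁻¹' s).indicator fun _ => (1 : ℝ) with ha
  set b : Ω → ℝ := (subvec V (Set.univ \ J) ⁻¹' t).indicator fun _ => (1 : ℝ) with hb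
  have hai : Integrable a μ := (integrable_const _).indicator (hA hs)
  have hbi : Integrable b μ := (integrable_const _).indicator (hY ht)
  have hbm : StronglyMeasurable[m] b := stronglyMeasurable_const.indicator (hYm ht)
  have hFi : Integrable F μ := integrable_condExp.congr hfe
  have hb_mul : ∀ g : Ω → ℝ, Integrable g μ → Integrable (b * g) μ := by
    intro g hg
    have : b * g = (subvec V (Set.univ \ J) ⁻¹' t).indicator g := by
      ext ω; by_cases hω : ω ∈ subvec V (Set.univ \ J) ⁻¹' t <;> simp [hb, hω]
    rw [this]
    exact hg.indicator (hY ht)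
  have hab : (A ⁻¹' s ∩ subvec V (Set.univ \ J) ⁻¹' t).indicator (fun _ => (1 : ℝ)) = b * a := by
    ext ω
    by_cases h1 : ω ∈ A ⁻¹' s <;> by_cases h2 : ω ∈ subvec V (Set.univ \ J) ⁻¹' t <;>
      simp [ha, hb, h1, h2]
  -- `E[1_A 1_Y | V] = F 1_Y`; conditioning further on `V_J` pulls out `F`.
  have e1 : μ[b * a | m] =ᵐ[μ] F * b := by
    filter_upwards [condExp_mul_of_stronglyMeasurable_left hbm (hb_mul a hai) hai, hfe]
      with ω h1 h2
    rw [h1, Pi.mul_apply, Pi.mul_apply, h2, mul_comm]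
  have e2 : μ[b * a | m'] =ᵐ[μ] F * μ[b | m'] :=
    (condExp_condExp_of_le hm'm hmle).symm.trans <| (condExp_congr_ae e1).trans <|
      condExp_mul_of_stronglyMeasurable_left hFm (by rw [mul_comm]; exact hb_mul F hFi) hbi
  have e3 : μ[a | m'] =ᵐ[μ] F := by
    refine (condExp_condExp_of_le hm'm hmle).symm.trans <| (condExp_congr_ae hfe).trans ?_
    rw [condExp_of_stronglyMeasurable (hm'm.trans hmle) hFm hFi]
  rw [hab]
  filter_upwards [e2, e3] with ω h2 h3
  rw [h2, h3, Pi.mul_apply]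

lemma isTreatBlanket_iff {μ : Measure Ω} [IsProbabilityMeasure μ]
    {A : Ω → ℝ} {V : I → Ω → ℝ} {J : Set I} [Countable I]
    (hA : Measurable A) (hV : ∀ i, Measurable (V i)) :
    IsTreatBlanket μ A V J ↔ CondProbFactors μ A V J :=
  ⟨fun h => h.condProbFactors hA hV, fun h => h.isTreatBlanket hA hV⟩

lemma isTreatBlanket_univ {μ : Measure Ω} [IsProbabilityMeasure μ]
    {A : Ω → ℝ} {V : I → Ω → ℝ} (hA : Measurable A) (hV : ∀ i, Measurable (V i)) :
    IsTreatBlanket μ A V Set.univ := by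
  refine CondProbFactors.isTreatBlanket hA hV fun s hs => ?_
  obtain ⟨g, hg, hge⟩ := (stronglyMeasurable_condExp
    (m := MeasurableSpace.comap (fun ω i => V i ω) inferInstance) (μ := μ)
    (f := (A ⁻¹' s).indicator fun _ => (1 : ℝ))).measurable.exists_eq_measurable_comp
  refine ⟨fun w => g fun i => w ⟨i, Set.mem_univ i⟩, hg.comp (by fun_prop), ?_⟩
  rw [hge]
  rfl

/-- Replacing the coordinates off `J` by those of an independent copy preserves a product
probability measure. -/
lemma map_piecewise_prod_pi [Fintype I] (ν : I → Measure ℝ) [∀ i, IsProbabilityMeasure (ν i)]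
    (J : Set I) [DecidablePred (· ∈ J)] :
    ((Measure.pi ν).prod (Measure.pi ν)).map
      (fun p : (I → ℝ) × (I → ℝ) => fun i => if i ∈ J then p.1 i else p.2 i) = Measure.pi ν := by
  have hmeas : Measurable
      (fun p : (I → ℝ) × (I → ℝ) => fun i => if i ∈ J then p.1 i else p.2 i) := by
    refine measurable_pi_lambda _ fun i => ?_
    by_cases hi : i ∈ J
    · simp only [hi, if_true]; fun_prop
    · simp only [hi, if_false]; fun_prop
  symm
  refine Measure.pi_eq fun s hs => ?_
  rw [Measure.map_apply hmeas (MeasurableSet.univ_pi hs)]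
  have : (fun p : (I → ℝ) × (I → ℝ) => fun i => if i ∈ J then p.1 i else p.2 i) ⁻¹'
      (Set.univ.pi s) = (Set.univ.pi fun i => if i ∈ J then s i else Set.univ) ×ˢ
        (Set.univ.pi fun i => if i ∈ J then Set.univ else s i) := by
    ext p
    simp only [Set.mem_preimage, Set.mem_pi, Set.mem_univ, true_imp_iff, Set.mem_prod,
      ← forall_and]
    refine forall_congr' fun i => ?_
    by_cases hi : i ∈ J <;> simp [hi]
  rw [this, Measure.prod_prod, Measure.pi_pi, Measure.pi_pi, ← Finset.prod_mul_distrib]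
  refine Finset.prod_congr rfl fun i _ => ?_
  by_cases hi : i ∈ J <;> simp [hi]

lemma IsTreatBlanket.inter [Fintype I] {μ : Measure Ω} [IsProbabilityMeasure μ]
    {A : Ω → ℝ} {V : I → Ω → ℝ} (hA : Measurable A) (hV : ∀ i, Measurable (V i))
    (hpos : PositiveFamilyDensity μ V) {J K : Set I}
    (hJ : IsTreatBlanket μ A V J) (hK : IsTreatBlanket μ A V K) :
    IsTreatBlanket μ A V (J ∩ K) := by
  classical
  have hVm : Measurable (fun ω i => V i ω) := measurable_pi_lambda _ hV
  rw [isTreatBlanket_iff hA hV] at hJ hK ⊢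
  intro s hs
  obtain ⟨f, hf, hfe⟩ := hJ s hs
  obtain ⟨g, hg, hge⟩ := hK s hs
  have : ∀ i, IsProbabilityMeasure (μ.map (V i)) := fun i =>
    Measure.isProbabilityMeasure_map (hV i).aemeasurable
  set ν := Measure.pi fun i => μ.map (V i) with hν
  set L := μ.map (fun ω i => V i ω) with hL
  have : IsProbabilityMeasure L := Measure.isProbabilityMeasure_map hVm.aemeasurable
  have hac : ν ≪ L := by
    have h1 : ν ≪ ν.withDensity (L.rnDeriv ν) :=
      withDensity_absolutelyContinuous' (Measure.measurable_rnDeriv _ _).aemeasurable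
        (hpos.2.mono fun x hx => hx.ne')
    rwa [Measure.withDensity_rnDeriv_eq _ _ hpos.1] at h1
  have hFm : Measurable (fun x : I → ℝ => f fun j => x j) := hf.comp (by fun_prop)
  have hGm : Measurable (fun x : I → ℝ => g fun j => x j) := hg.comp (by fun_prop)
  have hfgL : ∀ᵐ x ∂L, (f fun j => x j) = g fun k => x k := by
    rw [hL, ae_map_iff hVm.aemeasurable (measurableSet_eq_fun hFm hGm)]
    filter_upwards [hfe, hge] with ω h1 h2
    exact h1.symm.trans h2
  have hfgν : ∀ᵐ z ∂ν, (f fun j => z j) = g fun k => z k := hac.ae_le hfgL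
  -- Splice an independent copy `y` into the coordinates off `J`.
  have hsplice : ∀ᵐ p ∂(ν.prod ν), (f fun j => p.1 j) =
      g fun k => if (k : I) ∈ J then p.1 k else p.2 k := by
    have hmap : (ν.prod ν).map
        (fun p : (I → ℝ) × (I → ℝ) => fun i => if i ∈ J then p.1 i else p.2 i) = ν :=
      map_piecewise_prod_pi (fun i => μ.map (V i)) J
    have hne : (ν.prod ν).map
        (fun p : (I → ℝ) × (I → ℝ) => fun i => if i ∈ J then p.1 i else p.2 i) ≠ 0 := by
      rw [hmap]
      exact IsProbabilityMeasure.ne_zero _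
    have hfgmap := hfgν
    rw [← hmap] at hfgmap
    filter_upwards [ae_of_ae_map (AEMeasurable.of_map_ne_zero hne) hfgmap] with p hp
    rw [← hp]
    congr 1
    ext j
    simp
  -- Freeze one good value of `y`.
  have hswap : ∀ᵐ p ∂(ν.prod ν), (f fun j => p.2 j) =
      g fun k => if (k : I) ∈ J then p.2 k else p.1 k := by
    have h := hsplice
    rw [← Measure.prod_swap] at h
    exact ae_of_ae_map measurable_swap.aemeasurable h
  obtain ⟨y, hy⟩ := (Measure.ae_ae_of_ae_prod hswap).exists
  have hyL : ∀ᵐ ω ∂μ, (f fun j => V j ω) =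
      g fun k => if (k : I) ∈ J then V k ω else y k :=
    ae_of_ae_map hVm.aemeasurable (hpos.1.ae_le hy)
  refine ⟨fun u => g fun k => if hk : (k : I) ∈ J then u ⟨k, hk, k.2⟩ else y k,
    hg.comp ?_, ?_⟩
  · refine measurable_pi_lambda _ fun k => ?_
    by_cases hk : (k : I) ∈ J
    · simp only [hk, dite_true]; fun_prop
    · simp only [hk, dite_false]; fun_prop
  · filter_upwards [hfe, hyL] with ω h1 h2
    rw [h1]
    exact h2

end Helpers

/-- the treatment Markov boundary `R_A(V)` is itself a treatment Markov blanket
(`R_A(V) ∈ 𝔯_A(V)`, i.e. `A ⊥⊥ V_{I ∖ R_A(V)} | V_{R_A(V)}`), and hence the minimum element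
of `𝔯_A(V)`. -/
theorem treatBoundary_isBlanket
    {Ω I : Type*} [MeasurableSpace Ω] [StandardBorelSpace Ω] [Fintype I]
    (μ : Measure Ω) [IsProbabilityMeasure μ]
    (A : Ω → ℝ) (V : I → Ω → ℝ)
    (hA : Measurable A) (hV : ∀ i, Measurable (V i))
    (hpos : PositiveFamilyDensity μ V) :
    IsTreatBlanket μ A V (treatBoundary μ A V Set.univ) ∧
      ∀ J : Set I, IsTreatBlanket μ A V J → treatBoundary μ A V Set.univ ⊆ J := by
  have hset : {J' : Set I | J' ⊆ Set.univ ∧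
      CondIndepGiven μ A (subvec V (Set.univ \ J')) (subvec V J')} =
      {J' | IsTreatBlanket μ A V J'} := by
    ext J'
    simp [IsTreatBlanket]
  unfold treatBoundary
  rw [hset]
  refine ⟨?_, fun J hJ => Set.sInter_subset_of_mem hJ⟩
  have key : ∀ S : Set (Set I), S.Finite → (∀ J ∈ S, IsTreatBlanket μ A V J) →
      IsTreatBlanket μ A V (⋂₀ S) := by
    intro S hS
    induction S, hS using Set.Finite.induction_on with
    | empty =>
      intro _
      rw [Set.sInter_empty]
      exact isTreatBlanket_univ hA hV
    | insert _ _ ih =>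
      intro h
      rw [Set.sInter_insert]
      exact (h _ (Set.mem_insert _ _)).inter hA hV hpos
        (ih fun J hJ => h J (Set.mem_insert_of_mem _ hJ))
  exact key _ (Set.toFinite _) fun J hJ => hJ
end

section
/- (Reduction, outcome version.) Let A and Y be random variables and V = (V_i)_{i ∈ I} a finite family of random variables such that the joint law of (A, (V_i)_{i ∈ I}) is absolutely continuous with respect to P_A ⊗ ⨂_{i ∈ I} P_{V_i} with a density that is positive almost everywhere. Then for every outcome Markov blanket J'' ∈ 𝔯_{Y|A}(V), the outcome Markov boundary of the subfamily (V_i)_{i ∈ J''} equals that of the full family: R_{Y|A}(V_{J''}) = R_{Y|A}(V). -/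
/-!
For `J ⊆ K`, the relation `Y ⊥⊥ V_{K∖J} | (A, V_J)` holds iff, for every Borel set `s`, the
conditional probability of `{Y ∈ s}` given `σ(A, V_K)` is a.s. the one given `σ(A, V_J)`
(`condIndepGiven_iff`). By the tower property, blankets of a blanket `V_{J''}` are blankets of the
whole family, so the boundary of the whole family is contained in that of `V_{J''}`.

For the other inclusion it suffices that blankets `J`, `K` of the whole family have a blanket
intersection. Then `f = P(Y ∈ s | A, V_I)` is a.s. both a function `F` of `(A, V_J)` and a function
`F'` of `(A, V_K)`. By positivity the law of `(A, V)` has the same null sets as the product of its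
marginals, and under the product the coordinates off `K` may be replaced by an independent copy
`w`: `F (a, v_{J∩K}, w_{J∖K}) = F' (a, v_K)` almost everywhere. By Fubini some fixed `w` works, and
this exhibits `f` as a.s. a function of `(A, V_{J∩K})` (`exists_common_stronglyMeasurable`).
-/

open MeasureTheory ProbabilityTheory

open Filter

/-- The σ-algebra generated by `(A, V_J)`. -/
abbrev sigmaGen {Ω I : Type*} (A : Ω → ℝ) (V : I → Ω → ℝ) (J : Set I) : MeasurableSpace Ω :=
  MeasurableSpace.comap (fun ω => (A ω, subvec V J ω)) inferInstance

section

variable {Ω I : Type*} {A : Ω → ℝ} {V : I → Ω → ℝ}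

lemma measurable_sigmaGen_fst (J : Set I) : Measurable[sigmaGen A V J] A :=
  measurable_fst.comp (comap_measurable (fun ω => (A ω, subvec V J ω)))

lemma measurable_sigmaGen_coord {J : Set I} {i : I} (hi : i ∈ J) :
    Measurable[sigmaGen A V J] (V i) :=
  ((measurable_pi_apply (⟨i, hi⟩ : J)).comp measurable_snd).comp
    (comap_measurable (fun ω => (A ω, subvec V J ω)))

lemma measurable_subvec_of {m : MeasurableSpace Ω} {J : Set I}
    (hV : ∀ i ∈ J, Measurable[m] (V i)) : Measurable[m] (subvec V J) :=
  measurable_pi_iff.2 fun j => hV j j.2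

lemma measurable_pair_of {m : MeasurableSpace Ω} {J : Set I} (hA : Measurable[m] A)
    (hV : ∀ i ∈ J, Measurable[m] (V i)) : Measurable[m] (fun ω => (A ω, subvec V J ω)) :=
  hA.prodMk (measurable_subvec_of hV)

lemma sigmaGen_le_of {m : MeasurableSpace Ω} {J : Set I} (hA : Measurable[m] A)
    (hV : ∀ i ∈ J, Measurable[m] (V i)) : sigmaGen A V J ≤ m :=
  (measurable_pair_of hA hV).comap_le

lemma sigmaGen_mono {J K : Set I} (h : J ⊆ K) : sigmaGen A V J ≤ sigmaGen A V K :=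
  sigmaGen_le_of (measurable_sigmaGen_fst K) fun _ hi => measurable_sigmaGen_coord (h hi)

lemma comap_pair_diff {J K : Set I} (h : J ⊆ K) :
    MeasurableSpace.comap (fun ω => ((A ω, subvec V J ω), subvec V (K \ J) ω)) inferInstance
      = sigmaGen A V K := by
  apply le_antisymm
  · refine Measurable.comap_le (Measurable.prodMk (m := sigmaGen A V K) ?_ ?_)
    · exact measurable_pair_of (measurable_sigmaGen_fst K)
        fun _ hi => measurable_sigmaGen_coord (h hi)
    · exact measurable_subvec_of fun _ hi => measurable_sigmaGen_coord hi.1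
  · have hm := comap_measurable (m := inferInstance) (fun ω => ((A ω, subvec V J ω), subvec V (K \ J) ω))
    refine sigmaGen_le_of (measurable_fst.comp (measurable_fst.comp hm)) fun i hi => ?_
    by_cases hJ : i ∈ J
    · exact ((measurable_pi_apply (⟨i, hJ⟩ : J)).comp (measurable_snd.comp measurable_fst)).comp hm
    · exact ((measurable_pi_apply (⟨i, hi, hJ⟩ : (K \ J : Set I))).comp measurable_snd).comp hm

end

section

variable {Ω I : Type*} [mΩ : MeasurableSpace Ω] {μ : Measure Ω} [IsProbabilityMeasure μ]
  {A Y : Ω → ℝ} {V : I → Ω → ℝ}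

lemma condIndepGiven_iff [StandardBorelSpace Ω] [Finite I]
    (hA : Measurable A) (hY : Measurable Y) (hV : ∀ i, Measurable (V i))
    {J K : Set I} (h : J ⊆ K) :
    CondIndepGiven μ Y (subvec V (K \ J)) (fun ω => (A ω, subvec V J ω)) ↔
      ∀ s, MeasurableSet s →
        μ⟦Y ⁻¹' s | sigmaGen A V K⟧ =ᵐ[μ] μ⟦Y ⁻¹' s | sigmaGen A V J⟧ := by
  have hW : Measurable (fun ω => (A ω, subvec V J ω)) := measurable_pair_of hA fun i _ => hV i
  have hX : Measurable (subvec V (K \ J)) := measurable_pi_iff.2 fun j => hV j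
  have hleK : sigmaGen A V K ≤ mΩ := sigmaGen_le_of hA fun i _ => hV i
  constructor
  · rintro ⟨hle, hci⟩ s hs
    have hd := (condIndepFun_iff_condDistrib_prod_ae_eq_prodMkRight hY hX hW).1 hci.symm
    have hd' := ae_of_ae_map (hW.prodMk hX).aemeasurable hd
    have h1 := condDistrib_ae_eq_condExp (μ := μ) (hW.prodMk hX) hY hs
    have h2 := condDistrib_ae_eq_condExp (μ := μ) hW hY hs
    rw [comap_pair_diff h] at h1
    refine h1.symm.trans (EventuallyEq.trans ?_ h2)
    filter_upwards [hd'] with ω hω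
    rw [hω, Kernel.prodMkRight_apply]
  · intro hc
    refine ⟨hW.comap_le, ?_⟩
    rw [condIndepFun_iff_condExp_inter_preimage_eq_mul hY hX]
    intro s t hs ht
    change μ⟦Y ⁻¹' s ∩ subvec V (K \ J) ⁻¹' t | sigmaGen A V J⟧ =ᵐ[μ]
      fun ω => (μ⟦Y ⁻¹' s | sigmaGen A V J⟧) ω * (μ⟦subvec V (K \ J) ⁻¹' t | sigmaGen A V J⟧) ω
    set S := Y ⁻¹' s
    set T := subvec V (K \ J) ⁻¹' t
    have hS : MeasurableSet S := hY hs
    have hTK : MeasurableSet[sigmaGen A V K] T :=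
      measurable_subvec_of (fun _ hi => measurable_sigmaGen_coord hi.1) ht
    have hT : MeasurableSet T := hleK _ hTK
    have hprod : (S ∩ T).indicator (fun _ => (1 : ℝ))
        = S.indicator (fun _ => (1 : ℝ)) * T.indicator (fun _ => (1 : ℝ)) := by
      ext ω
      by_cases h1 : ω ∈ S <;> by_cases h2 : ω ∈ T <;> simp [h1, h2]
    have hSint : Integrable (S.indicator (fun _ => (1 : ℝ))) μ :=
      (integrable_const _).indicator hS
    have hTint : Integrable (T.indicator (fun _ => (1 : ℝ))) μ :=
      (integrable_const _).indicator hT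
    have hSTint : Integrable (S.indicator (fun _ => (1 : ℝ)) * T.indicator (fun _ => (1 : ℝ))) μ :=
      hprod ▸ (integrable_const _).indicator (hS.inter hT)
    have hTm : StronglyMeasurable[sigmaGen A V K] (T.indicator (fun _ => (1 : ℝ))) :=
      StronglyMeasurable.indicator (@stronglyMeasurable_const _ _ (sigmaGen A V K) _ _) hTK
    -- `1_T` is `σ(A, V_K)`-measurable, hence leaves the inner conditional expectation
    have e1 : μ[S.indicator (fun _ => (1 : ℝ)) * T.indicator (fun _ => (1 : ℝ)) | sigmaGen A V K]
        =ᵐ[μ] μ⟦S | sigmaGen A V J⟧ * T.indicator (fun _ => (1 : ℝ)) :=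
      (condExp_mul_of_stronglyMeasurable_right hTm hSTint hSint).trans
        ((hc s hs).mul EventuallyEq.rfl)
    have hint : Integrable (μ⟦S | sigmaGen A V J⟧ * T.indicator (fun _ => (1 : ℝ))) μ :=
      integrable_condExp.congr e1
    rw [hprod]
    calc μ[S.indicator (fun _ => (1 : ℝ)) * T.indicator (fun _ => (1 : ℝ)) | sigmaGen A V J]
        =ᵐ[μ] μ[μ[S.indicator (fun _ => (1 : ℝ)) * T.indicator (fun _ => (1 : ℝ))
            | sigmaGen A V K] | sigmaGen A V J] :=
          (condExp_condExp_of_le (sigmaGen_mono h) hleK).symm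
      _ =ᵐ[μ] μ[μ⟦S | sigmaGen A V J⟧ * T.indicator (fun _ => (1 : ℝ)) | sigmaGen A V J] :=
          condExp_congr_ae e1
      _ =ᵐ[μ] μ⟦S | sigmaGen A V J⟧ * μ⟦T | sigmaGen A V J⟧ :=
          condExp_mul_of_stronglyMeasurable_left stronglyMeasurable_condExp hint hTint

/-- Replacing the coordinates outside `K` by those of an independent copy preserves a product of
probability measures. -/
lemma measurePreserving_piecewise [Fintype I] (P : I → Measure ℝ)
    [∀ i, IsProbabilityMeasure (P i)] (K : Set I) [DecidablePred (· ∈ K)] :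
    MeasurePreserving (fun p : (I → ℝ) × (I → ℝ) => K.piecewise p.1 p.2)
      ((Measure.pi P).prod (Measure.pi P)) (Measure.pi P) := by
  have hm : Measurable (fun p : (I → ℝ) × (I → ℝ) => K.piecewise p.1 p.2) := by
    refine measurable_pi_iff.2 fun i => ?_
    by_cases hi : i ∈ K
    · simp only [Set.piecewise, hi, if_true]; fun_prop
    · simp only [Set.piecewise, hi, if_false]; fun_prop
  refine ⟨hm, (Measure.pi_eq fun s hs => ?_).symm⟩
  rw [Measure.map_apply hm (MeasurableSet.univ_pi hs)]
  have hpre : (fun p : (I → ℝ) × (I → ℝ) => K.piecewise p.1 p.2) ⁻¹' (Set.univ.pi s)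
      = (Set.univ.pi fun i => if i ∈ K then s i else Set.univ) ×ˢ
        (Set.univ.pi fun i => if i ∈ K then Set.univ else s i) := by
    ext p
    simp only [Set.mem_preimage, Set.mem_pi, Set.mem_prod, Set.mem_univ, true_imp_iff,
      ← forall_and]
    refine forall_congr' fun i => ?_
    by_cases hi : i ∈ K <;> simp [Set.piecewise, hi]
  rw [hpre, Measure.prod_prod, Measure.pi_pi, Measure.pi_pi, ← Finset.prod_mul_distrib]
  refine Finset.prod_congr rfl fun i _ => ?_
  by_cases hi : i ∈ K <;> simp [hi]

/-- Under a positive density, a random variable that is a.s. a function of `(A, V_J)` and a.s. a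
function of `(A, V_K)` is a.s. a function of `(A, V_{J ∩ K})`. -/
lemma exists_common_stronglyMeasurable [Fintype I]
    (hA : Measurable A) (hV : ∀ i, Measurable (V i)) (hpos : PositivePairDensity μ A V)
    {J K : Set I} {f g : Ω → ℝ} (hf : StronglyMeasurable[sigmaGen A V J] f)
    (hg : StronglyMeasurable[sigmaGen A V K] g) (hfg : f =ᵐ[μ] g) :
    ∃ h : Ω → ℝ, StronglyMeasurable[sigmaGen A V (J ∩ K)] h ∧ g =ᵐ[μ] h := by
  classical
  obtain ⟨F, hF, rfl⟩ := hf.exists_eq_measurable_comp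
  obtain ⟨F', hF', rfl⟩ := hg.exists_eq_measurable_comp
  have : ∀ i, IsProbabilityMeasure (μ.map (V i)) := fun i =>
    Measure.isProbabilityMeasure_map (hV i).aemeasurable
  have : IsProbabilityMeasure (μ.map A) := Measure.isProbabilityMeasure_map hA.aemeasurable
  obtain ⟨hac, hden⟩ := hpos
  set P := Measure.pi fun i => μ.map (V i)
  set Q := (μ.map A).prod P
  have hAV : Measurable (fun ω => (A ω, fun i => V i ω)) :=
    hA.prodMk (measurable_pi_iff.2 hV)
  -- positivity of the density makes the product law absolutely continuous w.r.t. the joint law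
  have hac' : Q ≪ μ.map (fun ω => (A ω, fun i => V i ω)) := by
    have h1 : Q ≪ Q.withDensity ((μ.map (fun ω => (A ω, fun i => V i ω))).rnDeriv Q) :=
      withDensity_absolutelyContinuous' (Measure.measurable_rnDeriv _ _).aemeasurable
        (hden.mono fun x hx => hx.ne')
    rwa [Measure.withDensity_rnDeriv_eq _ _ hac] at h1
  have hrJ : Measurable (fun z : ℝ × (I → ℝ) => F (z.1, fun j : J => z.2 j)) :=
    hF.measurable.comp (by fun_prop)
  have hrK : Measurable (fun z : ℝ × (I → ℝ) => F' (z.1, fun j : K => z.2 j)) :=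
    hF'.measurable.comp (by fun_prop)
  have hQ : ∀ᵐ z ∂Q, F (z.1, fun j : J => z.2 j) = F' (z.1, fun j : K => z.2 j) := by
    exact hac'.ae_le ((ae_map_iff hAV.aemeasurable (measurableSet_eq_fun hrJ hrK)).2 hfg)
  have hT : MeasurePreserving
      (fun z : (I → ℝ) × (ℝ × (I → ℝ)) => (z.2.1, K.piecewise z.2.2 z.1)) (P.prod Q) Q :=
    ((MeasurePreserving.id (μ.map A)).prod
      (measurePreserving_piecewise (fun i => μ.map (V i)) K)).comp
      ((measurePreserving_prodAssoc (μ.map A) P P).comp Measure.measurePreserving_swap)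
  obtain ⟨w, hw⟩ := (Measure.ae_ae_of_ae_prod (hT.quasiMeasurePreserving.ae hQ)).exists
  refine ⟨fun ω => F (A ω, fun j : J => K.piecewise (fun i => V i ω) w j), ?_, ?_⟩
  · refine Measurable.stronglyMeasurable (hF.measurable.comp ?_)
    refine measurable_pair_of (V := fun i ω => K.piecewise (fun i => V i ω) w i)
      (measurable_sigmaGen_fst _) fun j hjJ => ?_
    by_cases hj : j ∈ K
    · simp only [Set.piecewise, hj, if_true]
      exact measurable_sigmaGen_coord ⟨hjJ, hj⟩
    · simp only [Set.piecewise, hj, if_false]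
      exact measurable_const
  · filter_upwards [ae_of_ae_map hAV.aemeasurable (hac.ae_le hw)] with ω hω
    have hK : (fun j : K => K.piecewise (fun i => V i ω) w j) = subvec V K ω := by
      ext j
      simp [Set.piecewise, subvec]
    simp only [hK] at hω
    exact hω.symm

lemma condExp_inter_ae_eq [Fintype I]
    (hA : Measurable A) (hV : ∀ i, Measurable (V i))
    (hpos : PositivePairDensity μ A V) {J K : Set I} {s : Set ℝ}
    (hJ : μ⟦Y ⁻¹' s | sigmaGen A V Set.univ⟧ =ᵐ[μ] μ⟦Y ⁻¹' s | sigmaGen A V J⟧)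
    (hK : μ⟦Y ⁻¹' s | sigmaGen A V Set.univ⟧ =ᵐ[μ] μ⟦Y ⁻¹' s | sigmaGen A V K⟧) :
    μ⟦Y ⁻¹' s | sigmaGen A V K⟧ =ᵐ[μ] μ⟦Y ⁻¹' s | sigmaGen A V (J ∩ K)⟧ := by
  have hle : ∀ L : Set I, sigmaGen A V L ≤ mΩ := fun L => sigmaGen_le_of hA fun i _ => hV i
  obtain ⟨h, hm, he⟩ := exists_common_stronglyMeasurable hA hV hpos
    stronglyMeasurable_condExp stronglyMeasurable_condExp (hJ.symm.trans hK)
  have h1 : μ[h | sigmaGen A V (J ∩ K)] = h :=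
    condExp_of_stronglyMeasurable (hle _) hm (integrable_condExp.congr he)
  have h2 := (condExp_congr_ae (m := sigmaGen A V (J ∩ K)) he).symm.trans
    (condExp_condExp_of_le (sigmaGen_mono Set.inter_subset_right) (hle K))
  rw [h1] at h2
  exact he.trans h2

end

/-- Reduction, outcome version: for every outcome Markov blanket
`J'' ∈ 𝔯_{Y|A}(V)`, the outcome Markov boundary of the subfamily `(V_i)_{i ∈ J''}` equals
that of the full family: `R_{Y|A}(V_{J''}) = R_{Y|A}(V)`. -/
theorem outBoundary_reduce
    {Ω I : Type*} [MeasurableSpace Ω] [StandardBorelSpace Ω] [Fintype I]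
    (μ : Measure Ω) [IsProbabilityMeasure μ]
    (A Y : Ω → ℝ) (V : I → Ω → ℝ)
    (hA : Measurable A) (hY : Measurable Y) (hV : ∀ i, Measurable (V i))
    (hpos : PositivePairDensity μ A V)
    (J'' : Set I) (hJ'' : IsOutBlanket μ A Y V J'') :
    outBoundary μ A Y V J'' = outBoundary μ A Y V Set.univ := by
  have hJ : ∀ s, MeasurableSet s →
      μ⟦Y ⁻¹' s | sigmaGen A V Set.univ⟧ =ᵐ[μ] μ⟦Y ⁻¹' s | sigmaGen A V J''⟧ :=
    (condIndepGiven_iff hA hY hV (Set.subset_univ J'')).1 hJ''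
  apply Set.Subset.antisymm
  · intro i hi L hL
    obtain ⟨-, hL⟩ := hL
    rw [condIndepGiven_iff hA hY hV (Set.subset_univ L)] at hL
    refine (hi (L ∩ J'') ⟨Set.inter_subset_right, ?_⟩).1
    rw [condIndepGiven_iff hA hY hV Set.inter_subset_right]
    exact fun s hs => condExp_inter_ae_eq hA hV hpos (hL s hs) (hJ s hs)
  · intro i hi L hL
    obtain ⟨hsub, hL⟩ := hL
    rw [condIndepGiven_iff hA hY hV hsub] at hL
    refine hi L ⟨Set.subset_univ L, ?_⟩
    rw [condIndepGiven_iff hA hY hV (Set.subset_univ L)]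
    exact fun s hs => (hJ s hs).trans (hL s hs)
end
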